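/- arXiv:0910.5699 — 7 statements merged into one kernel-verified Lean document; each statement's English description precedes it below -/
import Mathlib

section
/- Let A be a commutative ring and let F : ModuleCat A ≌ ModuleCat A be an equivalence of categories whose underlying functor is additive and A-linear. Then there is a natural isomorphism between the functor F and the functor M ↦ M ⊗[A] F(A) (i.e. F.functor is isomorphic to tensorRight applied to the image under F of the monoidal unit A). -/
/-!
Let `F ⊣ G` with `F` an `A`-linear functor. Since `A` represents the identity functor of
`ModuleCat A`, there are `A`-linear isomorphisms `Hom(F A, N) ≃ Hom(A, G N) ≃ G N`, natural in `N`,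
so `G` is the internal hom out of `F A`. By uniqueness of left adjoints, `F` is isomorphic to the
left adjoint `F A ⊗[A] -` of that internal hom.
-/

open CategoryTheory MonoidalCategory

universe u

universe v

open Opposite

lemma additive_of_isLeftAdjoint {C D : Type*} [Category* C] [Category* D] [Preadditive C]
    [Preadditive D] [Limits.HasBinaryBiproducts C] (F : C ⥤ D) [F.IsLeftAdjoint] : F.Additive :=
  have := Limits.preservesBinaryBiproducts_of_preservesBinaryCoproducts F
  F.additive_of_preservesBinaryBiproducts

/-- The hom-set bijection of an adjunction whose left adjoint is `R`-linear, as an `R`-linear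
equivalence; the `R`-linear version of `CategoryTheory.Adjunction.homAddEquiv`. -/
def adjunctionHomLinearEquiv (R : Type*) [Semiring R] {C D : Type*} [Category* C] [Category* D]
    [Preadditive C] [Preadditive D] [Linear R C] [Linear R D] {F : C ⥤ D} {G : D ⥤ C}
    [F.Additive] [F.Linear R] (adj : F ⊣ G) (X : C) (Y : D) :
    (F.obj X ⟶ Y) ≃ₗ[R] (X ⟶ G.obj Y) :=
  LinearEquiv.symm
    { (adj.homAddEquiv X Y).symm with
      map_smul' r f := by simp [Adjunction.homEquiv_counit] }

/-- The natural isomorphism `Hom(F X, -) ≅ Hom(X, G -)` of functors to `ModuleCat R` given by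
an adjunction `F ⊣ G` with `F` an `R`-linear functor. -/
def linearCoyonedaObjIsoOfAdjunction (R : Type*) [Ring R] {C D : Type*} [Category.{v} C]
    [Category.{v} D] [Preadditive C] [Preadditive D] [Linear R C] [Linear R D] {F : C ⥤ D}
    {G : D ⥤ C} [F.Additive] [F.Linear R] (adj : F ⊣ G) (X : C) :
    (linearCoyoneda R D).obj (op (F.obj X)) ≅ G ⋙ (linearCoyoneda R C).obj (op X) :=
  NatIso.ofComponents (fun Y ↦ (adjunctionHomLinearEquiv R adj X Y).toModuleIso) fun f ↦ by
    ext g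
    exact adj.homEquiv_naturality_right g f

section ModuleCat

variable {A : Type u} [CommRing A]

variable (A) in
/-- The unit module represents the identity functor: evaluation at `1` is a natural isomorphism
`Hom(A, -) ≅ 𝟭`. -/
def linearCoyonedaUnitIso :
    (linearCoyoneda A (ModuleCat.{u} A)).obj (op (𝟙_ (ModuleCat.{u} A))) ≅ 𝟭 (ModuleCat.{u} A) :=
  NatIso.ofComponents fun M ↦
    (ModuleCat.homLinearEquiv.trans (LinearMap.ringLmapEquivSelf A A M)).toModuleIso

/-- A right adjoint `G` of an `A`-linear functor `F` out of `ModuleCat A` is represented by the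
image of the unit module: `Hom(F A, -) ≅ G`. -/
def linearCoyonedaObjUnitIsoRightAdjoint {D : Type*} [Category.{u} D] [Preadditive D] [Linear A D]
    {F : ModuleCat.{u} A ⥤ D} {G : D ⥤ ModuleCat.{u} A} [F.Additive] [F.Linear A] (adj : F ⊣ G) :
    (linearCoyoneda A D).obj (op (F.obj (𝟙_ (ModuleCat.{u} A)))) ≅ G :=
  linearCoyonedaObjIsoOfAdjunction A adj _ ≪≫
    Functor.isoWhiskerLeft G (linearCoyonedaUnitIso A) ≪≫ G.rightUnitor

theorem stmt_0_general (F : ModuleCat.{u} A ⥤ ModuleCat.{u} A) [F.IsLeftAdjoint] [F.Linear A] :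
    Nonempty (F ≅ tensorRight (F.obj (𝟙_ (ModuleCat.{u} A)))) := by
  have : F.Additive := additive_of_isLeftAdjoint F
  let adj := Adjunction.ofIsLeftAdjoint F
  -- In `ModuleCat A`, the functor `ihom M` is by definition `(linearCoyoneda A _).obj (op M)`.
  let ihomIso : ihom (F.obj (𝟙_ (ModuleCat.{u} A))) ≅ F.rightAdjoint :=
    linearCoyonedaObjUnitIsoRightAdjoint adj
  let isoTensorLeft : F ≅ tensorLeft (F.obj (𝟙_ (ModuleCat.{u} A))) :=
    adj.leftAdjointUniq ((ihom.adjunction _).ofNatIsoRight ihomIso)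
  exact ⟨isoTensorLeft ≪≫ BraidedCategory.tensorLeftIsoTensorRight _⟩

end ModuleCat

/-- For a commutative ring `A` and an additive, `A`-linear auto-equivalence `F` of the
category of `A`-modules, `F` is naturally isomorphic to `- ⊗[A] F(A)`. -/
theorem stmt_0 {A : Type u} [CommRing A]
    (F : ModuleCat.{u} A ≌ ModuleCat.{u} A)
    [F.functor.Additive] [F.functor.Linear A] :
    Nonempty (F.functor ≅ tensorRight (F.functor.obj (𝟙_ (ModuleCat.{u} A)))) :=
  stmt_0_general F.functor
end

section
/- Let A be a commutative ring and let F : ModuleCat A ⥤ ModuleCat A be an additive, A-linear functor that preserves all small colimits. Then there is a natural isomorphism between F and the functor M ↦ M ⊗[A] F(A) (i.e. F is isomorphic to tensorRight applied to F of the monoidal unit A). -/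
open CategoryTheory MonoidalCategory

universe u

/-!
For `m : M` write `â(m) : A ⟶ M` for the map `a ↦ a • m`. Linearity of `F` makes
`m ⊗ₜ x ↦ F(â(m)) x` a natural transformation `M ⊗ F(A) ⟶ F(M)`, which at `M = A` is the unitor
`A ⊗ F(A) ≅ F(A)`. Both functors preserve coproducts and cokernels, and every module is a cokernel
of a map between coproducts of copies of `A`, so the transformation is an isomorphism everywhere.
-/

namespace EilenbergWatts

open Limits

section Separator

universe v

variable {C D : Type*} [Category.{v} C] [Category* D]

theorem exists_isColimit_cokernelCofork_of_isSeparator [Abelian C] [HasCoproducts.{v} C]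
    {S : C} (hS : IsSeparator S) (X : C) :
    ∃ (I J : Type v) (r : (∐ fun _ : I ↦ S) ⟶ ∐ fun _ : J ↦ S) (p : (∐ fun _ : J ↦ S) ⟶ X)
      (w : r ≫ p = 0), Nonempty (IsColimit (CokernelCofork.ofπ p w)) := by
  have epi_desc := (isSeparator_iff_epi S).1 hS
  let p := Sigma.desc fun f : S ⟶ X ↦ f
  let q := Sigma.desc fun f : S ⟶ kernel p ↦ f
  have : Epi p := epi_desc X
  have : Epi q := epi_desc (kernel p)
  exact ⟨_, _, q ≫ kernel.ι p, p, by simp,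
    ⟨isCokernelEpiComp (Abelian.epiIsCokernelOfKernel _ (kernelIsKernel p)) q rfl⟩⟩

variable {F G : C ⥤ D} (τ : F ⟶ G)

theorem isIso_app_of_isColimit {J : Type*} [Category* J] {K : J ⥤ C} {c : Cocone K}
    (hc : IsColimit c) [PreservesColimit K F] [PreservesColimit K G]
    (h : ∀ j, IsIso (τ.app (K.obj j))) : IsIso (τ.app c.pt) := by
  have : IsIso (Functor.whiskerLeft K τ) := (NatTrans.isIso_iff_isIso_app _).2 h
  exact isIso_app_coconePt_of_preservesColimit K τ c hc

theorem isIso_of_isSeparator [Abelian C] [HasCoproducts.{v} C]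
    [∀ J : Type v, PreservesColimitsOfShape (Discrete J) F]
    [∀ J : Type v, PreservesColimitsOfShape (Discrete J) G]
    [PreservesColimitsOfShape WalkingParallelPair F]
    [PreservesColimitsOfShape WalkingParallelPair G]
    {S : C} (hS : IsSeparator S) [IsIso (τ.app S)] : IsIso τ := by
  have isIso_coproduct (J : Type v) : IsIso (τ.app (∐ fun _ : J ↦ S)) :=
    isIso_app_of_isColimit τ (coproductIsCoproduct _) fun _ ↦ ‹_›
  refine (NatTrans.isIso_iff_isIso_app τ).2 fun X ↦ ?_
  obtain ⟨I, J, r, p, w, ⟨hp⟩⟩ := exists_isColimit_cokernelCofork_of_isSeparator hS X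
  refine isIso_app_of_isColimit τ hp ?_
  rintro (_ | _)
  exacts [isIso_coproduct I, isIso_coproduct J]

end Separator

theorem isSeparator_of_self (R : Type u) [Ring R] : IsSeparator (ModuleCat.of R R) := by
  refine (isSeparator_def _).2 fun X Y f g h ↦ ?_
  ext x
  simpa using ConcreteCategory.congr_hom (h (ModuleCat.ofHom (LinearMap.toSpanSingleton R X x))) 1

instance preservesColimits_tensorRight {C : Type*} [Category* C] [MonoidalCategory C]
    [BraidedCategory C] (X : C) [Closed X] : PreservesColimits (tensorRight X) :=
  preservesColimits_of_natIso (BraidedCategory.tensorLeftIsoTensorRight X)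

variable {A : Type u} [CommRing A]

/-- The identification of the elements of a module `M` with the morphisms `A ⟶ M`, sending `m` to
`a ↦ a • m`. -/
def elementHom (M : ModuleCat.{u} A) : M ≃ₗ[A] (𝟙_ (ModuleCat.{u} A) ⟶ M) :=
  (LinearMap.ringLmapEquivSelf A A M).symm ≪≫ₗ
    (ModuleCat.homLinearEquiv (S := A) (M := 𝟙_ (ModuleCat.{u} A)) (N := M)).symm

theorem elementHom_apply {M : ModuleCat.{u} A} (m : M) (a : A) :
    (elementHom M m).hom a = a • m :=
  rfl

theorem elementHom_comp {M N : ModuleCat.{u} A} (m : M) (f : M ⟶ N) :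
    elementHom M m ≫ f = elementHom N (f m) := by
  refine ModuleCat.hom_ext (LinearMap.ext fun (a : A) ↦ ?_)
  rw [ModuleCat.hom_comp, LinearMap.comp_apply, elementHom_apply, elementHom_apply, map_smul]

theorem elementHom_unit (a : A) : elementHom (𝟙_ (ModuleCat.{u} A)) a = a • 𝟙 _ :=
  ModuleCat.hom_ext (LinearMap.ext fun (b : A) ↦ mul_comm b a)

variable (F : ModuleCat.{u} A ⥤ ModuleCat.{u} A) [F.Additive] [F.Linear A]

/-- The canonical comparison `M ⊗ F(A) ⟶ F(M)`, sending `m ⊗ₜ x` to the image of `x` under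
`F` applied to `a ↦ a • m`. -/
noncomputable def tensorComparison : tensorRight (F.obj (𝟙_ (ModuleCat.{u} A))) ⟶ F where
  app M := ModuleCat.ofHom <| TensorProduct.lift <|
    (ModuleCat.homLinearEquiv (S := A)).toLinearMap ∘ₗ F.mapLinearMap A ∘ₗ
      (elementHom M).toLinearMap
  naturality M N f := by
    refine ModuleCat.MonoidalCategory.tensor_ext fun m x ↦ ?_
    change F.map (elementHom N (f m)) x = F.map f (F.map (elementHom M m) x)
    rw [← elementHom_comp, F.map_comp, ModuleCat.comp_apply]

theorem tensorComparison_app_tmul (M : ModuleCat.{u} A) (m : M)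
    (x : F.obj (𝟙_ (ModuleCat.{u} A))) :
    (tensorComparison F).app M (m ⊗ₜ[A] x) = F.map (elementHom M m) x :=
  rfl

theorem tensorComparison_app_unit :
    (tensorComparison F).app (𝟙_ (ModuleCat.{u} A)) = (λ_ (F.obj (𝟙_ (ModuleCat.{u} A)))).hom := by
  refine ModuleCat.MonoidalCategory.tensor_ext fun a x ↦ ?_
  calc
    (tensorComparison F).app _ (a ⊗ₜ[A] x) = F.map (elementHom _ a) x :=
      tensorComparison_app_tmul F _ a x
    _ = (a • 𝟙 (F.obj (𝟙_ (ModuleCat.{u} A)))) x := by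
      rw [elementHom_unit, F.map_smul, F.map_id]
    _ = a • x := rfl

theorem isIso_tensorComparison [∀ J : Type u, PreservesColimitsOfShape (Discrete J) F]
    [PreservesColimitsOfShape WalkingParallelPair F] : IsIso (tensorComparison F) := by
  have : IsIso ((tensorComparison F).app (𝟙_ (ModuleCat.{u} A))) := by
    rw [tensorComparison_app_unit]
    infer_instance
  exact isIso_of_isSeparator (tensorComparison F) (isSeparator_of_self A)

end EilenbergWatts

/-- Eilenberg–Watts, affine endofunctor case: an additive, `A`-linear, colimit-preserving
functor `F : ModuleCat A ⥤ ModuleCat A` is naturally isomorphic to `- ⊗[A] F(A)`. -/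
theorem stmt_2 {A : Type u} [CommRing A]
    (F : ModuleCat.{u} A ⥤ ModuleCat.{u} A)
    [F.Additive] [F.Linear A] [Limits.PreservesColimits F] :
    Nonempty (F ≅ tensorRight (F.obj (𝟙_ (ModuleCat.{u} A)))) := by
  have : IsIso (EilenbergWatts.tensorComparison F) := EilenbergWatts.isIso_tensorComparison F
  exact ⟨(asIso (EilenbergWatts.tensorComparison F)).symm⟩
end

section
/- Let A and B be commutative rings and let F : ModuleCat A ≌ ModuleCat B be an equivalence of categories whose underlying functor is additive. Then there exist a ring isomorphism e : B ≃+* A and an invertible A-module L (that is, an A-module L admitting an A-module N and an A-linear isomorphism N ⊗[A] L ≅ A) such that the underlying functor of F is isomorphic to the composite of the functor M ↦ M ⊗[A] L (tensorRight L on ModuleCat A) followed by restriction of scalars along e : B →+* A. -/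
open CategoryTheory MonoidalCategory

universe u

/-!
The endomorphisms of the identity functor of `ModuleCat R` are the scalars `R`, and an additive
equivalence of categories identifies the endomorphism rings of the two identity functors. Thus an
equivalence between `ModuleCat A` and `ModuleCat B` determines an isomorphism `e : B ≃+* A`, and
after transporting the target along `e` it becomes an `A`-linear autoequivalence `E` of
`ModuleCat A`. A right adjoint `G` of `E` satisfies `G X ≅ Hom(A, G X) ≅ Hom(E A, X)`, so by
uniqueness of left adjoints `E` is tensoring with `E A`; essential surjectivity of `E` makes `E A`
invertible.
-/

section Center

variable {C D : Type*} [Category* C] [Category* D] [Preadditive C] [Preadditive D]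

/-- The restriction of central elements along a fully faithful functor `F : C ⥤ D`: the component
at `X` of the restriction of `z` is the endomorphism of `X` that `F` sends to `z.app (F.obj X)`. -/
noncomputable def centerPullback (F : C ⥤ D) [F.Full] [F.Faithful] [F.Additive] :
    CatCenter D →+* CatCenter C where
  toFun z :=
    { app := fun X => F.preimage (z.app (F.obj X))
      naturality := fun X Y f => F.map_injective (by simpa using z.naturality (F.map f)) }
  map_one' := CatCenter.ext _ _ fun X => F.map_injective (by simp [CatCenter.app])
  map_mul' z w := CatCenter.ext _ _ fun X => F.map_injective (by
    simp only [CatCenter.mul_app', F.map_comp]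
    simp [CatCenter.app])
  map_zero' := CatCenter.ext _ _ fun X => F.map_injective (by simp [CatCenter.app])
  map_add' z w := CatCenter.ext _ _ fun X => F.map_injective (by simp [CatCenter.app, F.map_add])

lemma map_centerPullback_app (F : C ⥤ D) [F.Full] [F.Faithful] [F.Additive]
    (z : CatCenter D) (X : C) :
    F.map ((centerPullback F z).app X) = z.app (F.obj X) :=
  F.map_preimage _

lemma centerPullback_inverse_functor (F : C ≌ D) [F.functor.Additive] (z : CatCenter D) :
    centerPullback F.inverse (centerPullback F.functor z) = z := by
  ext Y
  apply (F.inverse ⋙ F.functor).map_injective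
  calc
    F.functor.map (F.inverse.map ((centerPullback F.inverse (centerPullback F.functor z)).app Y))
      = z.app (F.functor.obj (F.inverse.obj Y)) := by simp only [map_centerPullback_app]
    _ = F.functor.map (F.inverse.map (z.app Y)) := by
      rw [← cancel_mono (F.counit.app Y), ← z.naturality]
      exact (F.counit.naturality (z.app Y)).symm

/-- The isomorphism between the centers of two preadditive categories induced by an additive
equivalence, given by restriction along the two functors. -/
noncomputable def centerEquivOfEquivalence (F : C ≌ D) [F.functor.Additive] :
    CatCenter D ≃+* CatCenter C :=
  { centerPullback F.functor with
    invFun := centerPullback F.inverse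
    left_inv := centerPullback_inverse_functor F
    right_inv :=
      haveI : F.symm.functor.Additive := inferInstanceAs F.inverse.Additive
      centerPullback_inverse_functor F.symm }

end Center

lemma toCatCenter_moduleCat_bijective (R : Type u) [CommRing R] :
    Function.Bijective (Linear.toCatCenter R (ModuleCat.{u} R)) := by
  refine ⟨fun r s h => ?_, fun z => ⟨(z.app (ModuleCat.of R R)).hom (1 : R), ?_⟩⟩
  · simpa using congr((($h).app (ModuleCat.of R R)).hom (1 : R))
  · ext M m
    simpa using congr(($(z.naturality
      (ModuleCat.ofHom (LinearMap.toSpanSingleton R M m)))).hom (1 : R)).symm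

lemma exists_ringEquiv_map_smul_id {A B : Type u} [CommRing A] [CommRing B]
    (F : ModuleCat.{u} A ≌ ModuleCat.{u} B) [F.functor.Additive] :
    ∃ e : B ≃+* A, ∀ (b : B) (M : ModuleCat.{u} A),
      F.functor.map (e b • 𝟙 M) = b • 𝟙 (F.functor.obj M) := by
  let scalarsA := RingEquiv.ofBijective _ (toCatCenter_moduleCat_bijective A)
  let scalarsB := RingEquiv.ofBijective _ (toCatCenter_moduleCat_bijective B)
  let e := (scalarsB.trans (centerEquivOfEquivalence F)).trans scalarsA.symm
  refine ⟨e, fun b M => ?_⟩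
  have central : scalarsA (e b) = centerPullback F.functor (scalarsB b) :=
    scalarsA.apply_symm_apply _
  calc
    F.functor.map (e b • 𝟙 M) = F.functor.map ((scalarsA (e b)).app M) := rfl
    _ = b • 𝟙 (F.functor.obj M) := by rw [central, map_centerPullback_app]; rfl

lemma linear_comp_restrictScalars_symm {A B C : Type*} [CommRing A] [CommRing B] [Category* C]
    [Preadditive C] [Linear A C] (F : C ⥤ ModuleCat B) (e : B ≃+* A)
    (map_smul_id : ∀ (b : B) (X : C), F.map (e b • 𝟙 X) = b • 𝟙 (F.obj X)) :
    (F ⋙ ModuleCat.restrictScalars e.symm.toRingHom).Linear A := by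
  refine (Functor.linear_iff A _).2 fun X a => ?_
  obtain ⟨b, rfl⟩ := e.surjective a
  rw [Functor.comp_map, map_smul_id]
  ext m
  exact congr($(e.symm_apply_apply b) • (m : F.obj X)).symm

section EilenbergWatts

open Opposite

/-- The adjunction isomorphism `Hom(X, G -) ≅ Hom(F X, -)` of `R`-module-valued functors, for an
`R`-linear left adjoint `F`. -/
def linearCoyonedaCompIso (R : Type*) [Ring R] {C D : Type*} [Category.{u} C] [Category.{u} D]
    [Preadditive C] [Preadditive D] [Linear R C] [Linear R D] {F : C ⥤ D} {G : D ⥤ C}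
    (adj : F ⊣ G) [F.Additive] [F.Linear R] (X : C) :
    G ⋙ (linearCoyoneda R C).obj (op X) ≅ (linearCoyoneda R D).obj (op (F.obj X)) :=
  NatIso.ofComponents
    (fun Y => LinearEquiv.toModuleIso
      { (adj.homAddEquiv X Y).symm with
        map_smul' := fun r f => by simp [Adjunction.homEquiv_counit] })
    (fun f => by
      ext g
      exact adj.homEquiv_naturality_right_symm g f)

variable {R : Type u} [CommRing R]

/-- The isomorphism `Hom(R, M) ≅ M`, natural in `M`. -/
def linearCoyonedaSelfIso :
    (linearCoyoneda R (ModuleCat.{u} R)).obj (op (ModuleCat.of R R)) ≅ 𝟭 (ModuleCat.{u} R) :=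
  NatIso.ofComponents fun M =>
    (ModuleCat.homLinearEquiv.trans (LinearMap.ringLmapEquivSelf R R M)).toModuleIso

/-- The Eilenberg–Watts theorem over a commutative ring `R`: an `R`-linear left adjoint
endofunctor of `ModuleCat R` is tensoring with its value at `R`. -/
def eilenbergWattsIso {F G : ModuleCat.{u} R ⥤ ModuleCat.{u} R} (adj : F ⊣ G)
    [F.Additive] [F.Linear R] : F ≅ tensorRight (F.obj (ModuleCat.of R R)) :=
  let L := F.obj (ModuleCat.of R R)
  let homIso : ihom L ≅ G :=
    (linearCoyonedaCompIso R adj (ModuleCat.of R R)).symm ≪≫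
      Functor.isoWhiskerLeft G linearCoyonedaSelfIso
  adj.leftAdjointUniq ((ihom.adjunction L).ofNatIsoRight homIso) ≪≫
    BraidedCategory.tensorLeftIsoTensorRight L

end EilenbergWatts

/-- Every additive equivalence `ModuleCat A ≌ ModuleCat B` between module categories of
commutative rings is, up to natural isomorphism, the composite of tensoring with an
invertible `A`-module `L` followed by restriction of scalars along a ring isomorphism
`e : B ≃+* A`. -/
theorem stmt_3 {A B : Type u} [CommRing A] [CommRing B]
    (F : ModuleCat.{u} A ≌ ModuleCat.{u} B) [F.functor.Additive] :
    ∃ (e : B ≃+* A) (L : ModuleCat.{u} A),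
      (∃ N : ModuleCat.{u} A, Nonempty (TensorProduct A N L ≃ₗ[A] A)) ∧
      Nonempty (F.functor ≅ tensorRight L ⋙ ModuleCat.restrictScalars e.toRingHom) := by
  obtain ⟨e, map_smul_id⟩ := exists_ringEquiv_map_smul_id F
  let restrict := ModuleCat.restrictScalarsEquivalenceOfRingEquiv e.symm
  let E := F.trans restrict
  have : E.functor.Additive := inferInstanceAs (F.functor ⋙ restrict.functor).Additive
  have : E.functor.Linear A := linear_comp_restrictScalars_symm F.functor e map_smul_id
  let L := E.functor.obj (ModuleCat.of A A)
  let tensorIso : E.functor ≅ tensorRight L := eilenbergWattsIso E.toAdjunction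
  have : (tensorRight L).EssSurj := Functor.essSurj_of_iso tensorIso
  refine ⟨e, L, ⟨(tensorRight L).objPreimage (ModuleCat.of A A), ⟨?_⟩⟩, ⟨?_⟩⟩
  · exact ((tensorRight L).objObjPreimageIso (ModuleCat.of A A)).toLinearEquiv
  · exact Functor.isoWhiskerLeft F.functor restrict.unitIso ≪≫
      Functor.isoWhiskerRight tensorIso (ModuleCat.restrictScalars e.toRingHom)
end

section
/- Let A and B be commutative rings. If there exists an equivalence of categories F : ModuleCat A ≌ ModuleCat B whose underlying functor is additive, then A and B are isomorphic as rings. -/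
open CategoryTheory

universe u

/-!
An additive equivalence `F : C ≌ D` identifies the centers of `C` and `D`, because whiskering
with `F` identifies both of them with the endomorphism ring of the functor `F`. On the other hand,
an endomorphism of the identity functor of `ModuleCat R` is determined by its value at the element
`1` of the regular module, which is a central element of `R`, so the center of `ModuleCat R` is the
center of the ring `R`. Hence the center of a ring is an invariant of its category of modules.
-/

universe v u₁ v₁ u₂ v₂

section CategoryCenter

variable {C : Type u₁} [Category.{v₁} C] [Preadditive C]
  {D : Type u₂} [Category.{v₂} D] [Preadditive D]

/-- The isomorphism of endomorphism rings induced by a fully faithful additive functor; the additive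
counterpart of `CategoryTheory.Functor.FullyFaithful.mulEquivEnd`. -/
noncomputable def endRingEquivOfFullyFaithful {F : C ⥤ D} [F.Additive] (hF : F.FullyFaithful)
    (X : C) : End X ≃+* End (F.obj X) where
  __ := hF.mulEquivEnd X
  map_add' _ _ := F.map_add

/-- The isomorphism between the centers of two preadditive categories induced by an additive
equivalence `e`. Both centers are compared with the ring `End e.functor`, up to the definitional
equalities `𝟭 C ⋙ e.functor = e.functor = e.functor ⋙ 𝟭 D`. -/
noncomputable def catCenterRingEquivOfEquivalence (e : C ≌ D) [e.functor.Additive] :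
    CatCenter C ≃+* CatCenter D :=
  let postcompose : CatCenter C ≃+* End e.functor :=
    endRingEquivOfFullyFaithful
      (.ofFullyFaithful ((Functor.whiskeringRight C C D).obj e.functor)) (𝟭 C)
  let precompose : CatCenter D ≃+* End e.functor :=
    endRingEquivOfFullyFaithful
      (.ofFullyFaithful ((Functor.whiskeringLeft C D D).obj e.functor)) (𝟭 D)
  postcompose.trans precompose.symm

end CategoryCenter

section ModuleCategory

open scoped ModuleCat.Algebra

variable {R : Type u} [Ring R] [Small.{v} R]

/-- The scalar through which an element of the center of `ModuleCat R` acts: its value at the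
element `1` of the regular module, which lives in `ModuleCat.{v} R` as `Shrink.{v} R`. -/
noncomputable def catCenterScalar (z : CatCenter (ModuleCat.{v} R)) : R :=
  Shrink.linearEquiv R R
    ((z.app (ModuleCat.of R (Shrink.{v} R))).hom ((Shrink.linearEquiv R R).symm 1))

lemma catCenter_app_apply (z : CatCenter (ModuleCat.{v} R)) (M : ModuleCat.{v} R) (m : M) :
    (z.app M).hom m = catCenterScalar z • m := by
  let orbitMap : ModuleCat.of R (Shrink.{v} R) ⟶ M :=
    ModuleCat.ofHom (LinearMap.toSpanSingleton R M m ∘ₗ (Shrink.linearEquiv R R).toLinearMap)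
  have naturality_at_one :=
    ConcreteCategory.congr_hom (z.naturality orbitMap) ((Shrink.linearEquiv R R).symm 1)
  simpa [orbitMap, catCenterScalar] using naturality_at_one

lemma catCenterScalar_mem_center (z : CatCenter (ModuleCat.{v} R)) :
    catCenterScalar z ∈ Subring.center R := by
  refine Subring.mem_center_iff.mpr fun r ↦ ?_
  let shrinkEquiv := Shrink.linearEquiv.{v} R R
  let action : Shrink.{v} R →ₗ[R] Shrink.{v} R := (z.app (ModuleCat.of R (Shrink.{v} R))).hom
  calc r * catCenterScalar z
      = shrinkEquiv (action (shrinkEquiv.symm (r • 1))) := by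
        rw [map_smul, map_smul, map_smul, smul_eq_mul]
        rfl
    _ = shrinkEquiv (catCenterScalar z • shrinkEquiv.symm (r • 1)) :=
        congrArg shrinkEquiv (catCenter_app_apply z (ModuleCat.of R (Shrink.{v} R)) _)
    _ = catCenterScalar z * r := by simp

lemma catCenterScalar_toCatCenter (c : Subring.center R) :
    catCenterScalar (Linear.toCatCenter (Subring.center R) (ModuleCat.{v} R) c) = c := by
  change Shrink.linearEquiv R R ((c : R) • (Shrink.linearEquiv R R).symm 1) = c
  simp

variable (R) in
/-- The center of the category of `R`-modules is the center of the ring `R`. -/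
noncomputable def centerRingEquivCatCenter :
    Subring.center R ≃+* CatCenter (ModuleCat.{v} R) where
  __ := Linear.toCatCenter (Subring.center R) (ModuleCat.{v} R)
  invFun z := ⟨catCenterScalar z, catCenterScalar_mem_center z⟩
  left_inv c := Subtype.ext (catCenterScalar_toCatCenter c)
  right_inv z := by
    ext M m
    exact (catCenter_app_apply z M m).symm

end ModuleCategory

/-- A commutative ring is its own center. -/
noncomputable def centerRingEquivSelf (R : Type*) [CommRing R] : Subring.center R ≃+* R :=
  (RingEquiv.subringCongr (Subring.center_eq_top R)).trans Subring.topEquiv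

theorem stmt_4_general {A : Type u₁} {B : Type u₂} [Ring A] [Ring B] [Small.{v₁} A] [Small.{v₂} B]
    (F : ModuleCat.{v₁} A ≌ ModuleCat.{v₂} B) :
    Nonempty (Subring.center A ≃+* Subring.center B) := by
  have : F.functor.Additive := F.functor.additive_of_preserves_binary_products
  exact ⟨(centerRingEquivCatCenter A).trans
    ((catCenterRingEquivOfEquivalence F).trans (centerRingEquivCatCenter B).symm)⟩

/-- If the categories of modules over two commutative rings `A` and `B` are equivalent via
an additive functor, then `A` and `B` are isomorphic as rings. -/
theorem stmt_4 {A B : Type u} [CommRing A] [CommRing B]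
    (F : ModuleCat.{u} A ≌ ModuleCat.{u} B) [F.functor.Additive] :
    Nonempty (A ≃+* B) := by
  obtain ⟨e⟩ := stmt_4_general F
  exact ⟨(centerRingEquivSelf A).symm.trans (e.trans (centerRingEquivSelf B))⟩
end

section
/- Let A be a commutative ring, let F : ModuleCat A ≌ ModuleCat A be an equivalence whose underlying functor is additive and A-linear, and let L be an invertible A-module (i.e. there exists an A-module N and an A-linear isomorphism N ⊗[A] L ≅ A). Then there is a natural isomorphism of functors (tensorLeft L) ⋙ F.functor ≅ F.functor ⋙ (tensorLeft L); that is, F(L ⊗[A] M) ≅ L ⊗[A] F(M) naturally in M. -/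
open CategoryTheory MonoidalCategory

universe u

/-!
In an `A`-linear category `C`, the copower of `M : C` by an `A`-module `L` is the object `T`
representing `X ↦ Hom_A(L, C(M, X))`. In `ModuleCat A` it is `L ⊗ M`. An `A`-linear left adjoint
`F ⊣ G` preserves copowers, because
`(F T ⟶ X) ≃ (T ⟶ G X) ≃ Hom_A(L, M ⟶ G X) ≃ Hom_A(L, F M ⟶ X)`.
Hence `F (L ⊗ M)` and `L ⊗ F M` are both copowers of `F M` by `L`.
-/

section LinearCategory

variable {A : Type*} [Semiring A] {C D : Type*} [Category* C] [Category* D]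
  [Preadditive C] [Preadditive D] [Linear A C] [Linear A D]
  {L : Type*} [AddCommMonoid L] [Module A L]

/-- The linear family `i : L →ₗ[A] (M ⟶ T)` exhibits `T` as the copower of `M` by the `A`-module
`L`: every linear family `L →ₗ[A] (M ⟶ X)` factors uniquely through `i`. -/
def IsCopower {M T : C} (i : L →ₗ[A] (M ⟶ T)) : Prop :=
  ∀ X : C, Function.Bijective fun f : T ⟶ X ↦ Linear.rightComp A M f ∘ₗ i

namespace IsCopower

variable {M T T' X : C} {i : L →ₗ[A] (M ⟶ T)} {i' : L →ₗ[A] (M ⟶ T')}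

lemma hom_ext (hi : IsCopower i) {f g : T ⟶ X} (h : ∀ l, i l ≫ f = i l ≫ g) : f = g :=
  (hi X).injective (LinearMap.ext h)

/-- The morphism out of a copower induced by a linear family of morphisms. -/
noncomputable def desc (hi : IsCopower i) (φ : L →ₗ[A] (M ⟶ X)) : T ⟶ X :=
  ((hi X).surjective φ).choose

lemma fac (hi : IsCopower i) (φ : L →ₗ[A] (M ⟶ X)) (l : L) : i l ≫ hi.desc φ = φ l :=
  LinearMap.congr_fun ((hi X).surjective φ).choose_spec l

/-- The canonical isomorphism between two copowers of the same object by the same module. -/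
noncomputable def uniqueUpToIso (hi : IsCopower i) (hi' : IsCopower i') : T ≅ T' where
  hom := hi.desc i'
  inv := hi'.desc i
  hom_inv_id := hi.hom_ext fun l ↦ by rw [← Category.assoc, fac, fac, Category.comp_id]
  inv_hom_id := hi'.hom_ext fun l ↦ by rw [← Category.assoc, fac, fac, Category.comp_id]

lemma comp_uniqueUpToIso_hom (hi : IsCopower i) (hi' : IsCopower i') (l : L) :
    i l ≫ (hi.uniqueUpToIso hi').hom = i' l :=
  hi.fac i' l

end IsCopower

/-- The hom-set bijection of an adjunction whose left adjoint is `A`-linear, as an `A`-linear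
equivalence. -/
def homLinearEquivOfAdjunction {F : C ⥤ D} {G : D ⥤ C} (adj : F ⊣ G) [F.Additive] [F.Linear A]
    (M : C) (X : D) : (F.obj M ⟶ X) ≃ₗ[A] (M ⟶ G.obj X) :=
  LinearEquiv.symm
    { Linear.rightComp A (F.obj M) (adj.counit.app X) ∘ₗ F.mapLinearMap A with
      invFun := adj.homEquiv M X
      left_inv := fun f ↦ by simp [Adjunction.homEquiv_unit]
      right_inv := fun f ↦ by simp [Adjunction.homEquiv_unit] }

lemma IsCopower.map_of_adjunction {F : C ⥤ D} {G : D ⥤ C} (adj : F ⊣ G) [F.Additive]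
    [F.Linear A] {M T : C} {i : L →ₗ[A] (M ⟶ T)} (hi : IsCopower i) :
    IsCopower (F.mapLinearMap A ∘ₗ i) := by
  intro X
  let transpose : (L →ₗ[A] (M ⟶ G.obj X)) ≃+ (L →ₗ[A] (F.obj M ⟶ X)) :=
    (LinearEquiv.refl A L).arrowCongrAddEquiv (homLinearEquivOfAdjunction adj M X).symm
  have factorization : (fun f : F.obj T ⟶ X ↦ Linear.rightComp A _ f ∘ₗ F.mapLinearMap A ∘ₗ i) =
      transpose ∘ (fun g ↦ Linear.rightComp A M g ∘ₗ i) ∘ adj.homEquiv T X := by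
    funext f
    ext l
    change F.map (i l) ≫ f = (adj.homEquiv M X).symm (i l ≫ adj.homEquiv T X f)
    rw [adj.homEquiv_naturality_left_symm, Equiv.symm_apply_apply]
  rw [factorization]
  exact transpose.bijective.comp ((hi _).comp (adj.homEquiv T X).bijective)

end LinearCategory

section ModuleCat

variable {A : Type u} [CommRing A]

/-- The linear family `l ↦ (m ↦ l ⊗ₜ m)`, exhibiting `L ⊗ M` as the copower of `M` by `L`. -/
noncomputable def tensorInclusion (L M : ModuleCat.{u} A) : L →ₗ[A] (M ⟶ L ⊗ M) :=
  ModuleCat.homLinearEquiv.symm.toLinearMap ∘ₗ TensorProduct.mk A L M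

lemma isCopower_tensorInclusion (L M : ModuleCat.{u} A) : IsCopower (tensorInclusion L M) := by
  refine fun X ↦ ⟨fun f g h ↦ ?_, fun φ ↦ ?_⟩
  · refine ModuleCat.hom_ext (TensorProduct.ext' fun l m ↦ ?_)
    exact congrArg (fun φ ↦ (φ l).hom m) h
  · refine ⟨ModuleCat.ofHom (TensorProduct.lift (ModuleCat.homLinearEquiv.toLinearMap ∘ₗ φ)), ?_⟩
    ext l m
    exact TensorProduct.lift.tmul l m

lemma tensorInclusion_whiskerLeft (L : ModuleCat.{u} A) {M N : ModuleCat.{u} A} (f : M ⟶ N)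
    (l : L) : tensorInclusion L M l ≫ L ◁ f = f ≫ tensorInclusion L N l :=
  rfl

theorem stmt_7_general (F : ModuleCat.{u} A ⥤ ModuleCat.{u} A) [F.IsLeftAdjoint] [F.Additive]
    [F.Linear A] (L : ModuleCat.{u} A) : Nonempty (tensorLeft L ⋙ F ≅ F ⋙ tensorLeft L) := by
  have map_isCopower (M : ModuleCat.{u} A) : IsCopower (F.mapLinearMap A ∘ₗ tensorInclusion L M) :=
    (isCopower_tensorInclusion L M).map_of_adjunction (.ofIsLeftAdjoint F)
  let comparison (M : ModuleCat.{u} A) : F.obj (L ⊗ M) ≅ L ⊗ F.obj M :=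
    (map_isCopower M).uniqueUpToIso (isCopower_tensorInclusion L (F.obj M))
  have fac (M : ModuleCat.{u} A) (l : L) :
      F.map (tensorInclusion L M l) ≫ (comparison M).hom = tensorInclusion L (F.obj M) l :=
    (map_isCopower M).comp_uniqueUpToIso_hom _ l
  refine ⟨NatIso.ofComponents comparison fun {M N} f ↦ (map_isCopower M).hom_ext fun l ↦ ?_⟩
  calc F.map (tensorInclusion L M l) ≫ F.map (L ◁ f) ≫ (comparison N).hom
      = F.map f ≫ F.map (tensorInclusion L N l) ≫ (comparison N).hom := by
        simp only [← F.map_comp_assoc, tensorInclusion_whiskerLeft]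
    _ = tensorInclusion L (F.obj M) l ≫ L ◁ F.map f := by
        rw [fac, tensorInclusion_whiskerLeft]
    _ = F.map (tensorInclusion L M l) ≫ (comparison M).hom ≫ L ◁ F.map f := by
        rw [← fac, Category.assoc]

end ModuleCat

/-- Tensoring with an invertible `A`-module `L` commutes with any additive, `A`-linear
auto-equivalence `F` of `ModuleCat A`: `F(L ⊗ M) ≅ L ⊗ F(M)` naturally in `M`. -/
theorem stmt_7 {A : Type u} [CommRing A]
    (F : ModuleCat.{u} A ≌ ModuleCat.{u} A)
    [F.functor.Additive] [F.functor.Linear A]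
    (L : ModuleCat.{u} A)
    (hL : ∃ N : ModuleCat.{u} A, Nonempty (TensorProduct A N L ≃ₗ[A] A)) :
    Nonempty (tensorLeft L ⋙ F.functor ≅ F.functor ⋙ tensorLeft L) :=
  stmt_7_general F.functor L
end

section
/- Let i : A' →+* A and j : A'' →+* A be homomorphisms of commutative rings with j surjective, and let T := {(a', a'') ∈ A' × A'' : i a' = j a''} be the fiber product ring, a subring of A' × A'', with projections p : T →+* A' and q : T →+* A''. Let X be an A'-module and Y an A''-module (each viewed as a T-module via p, resp. q), and suppose given an A-linear isomorphism φ : A ⊗[A'] X ≃ A ⊗[A''] Y (base change along i and along j). Let P := {(x, y) ∈ X × Y : φ (1 ⊗ x) = 1 ⊗ y}, a T-submodule of X × Y. Then the A'-linear map A' ⊗[T] P → X determined by a' ⊗ (x, y) ↦ a' • x is bijective. -/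
open TensorProduct

namespace Stmt10

variable (A' A'' A : Type) [CommRing A'] [CommRing A''] [CommRing A]
  [Algebra A' A] [Algebra A'' A]

/-- The fiber product ring `T = {(a', a'') ∈ A' × A'' : i a' = j a''}`, a subring of
`A' × A''`, where `i : A' → A` and `j : A'' → A` are the given ring homomorphisms
(packaged as algebra structures). -/
def T : Subring (A' × A'') :=
  RingHom.eqLocus ((algebraMap A' A).comp (RingHom.fst A' A''))
    ((algebraMap A'' A).comp (RingHom.snd A' A''))

/-- The first projection `p : T →+* A'`. -/
def p : T A' A'' A →+* A' := (RingHom.fst A' A'').comp (T A' A'' A).subtype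

/-- The second projection `q : T →+* A''`. -/
def q : T A' A'' A →+* A'' := (RingHom.snd A' A'').comp (T A' A'' A).subtype

variable (X Y : Type) [AddCommGroup X] [Module A' X] [AddCommGroup Y] [Module A'' Y]

/-- Any `A'`-module is viewed as a `T`-module via `p`. -/
instance (priority := 100) moduleTleft : Module (T A' A'' A) X := Module.compHom X (p A' A'' A)

/-- Any `A''`-module is viewed as a `T`-module via `q`. -/
instance (priority := 100) moduleTright : Module (T A' A'' A) Y := Module.compHom Y (q A' A'' A)

instance : SMulCommClass (T A' A'' A) A' X :=
  ⟨fun t a x => by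
    show p A' A'' A t • (a • x) = a • (p A' A'' A t • x)
    rw [smul_smul, smul_smul, mul_comm]⟩

variable (φ : TensorProduct A' A X ≃ₗ[A] TensorProduct A'' A Y)

/-- The patching module `P = {(x, y) ∈ X × Y : φ (1 ⊗ x) = 1 ⊗ y}`, a `T`-submodule of
`X × Y`; here `φ : A ⊗[A'] X ≃ₗ[A] A ⊗[A''] Y` is a given `A`-linear isomorphism between
the base changes. -/
def patchSub : Submodule (T A' A'' A) (X × Y) where
  carrier := {xy | φ ((1 : A) ⊗ₜ[A'] xy.1) = (1 : A) ⊗ₜ[A''] xy.2}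
  add_mem' := by
    rintro ⟨x₁, y₁⟩ ⟨x₂, y₂⟩ h₁ h₂
    simp only [Set.mem_setOf_eq] at h₁ h₂ ⊢
    simp only [Prod.fst_add, Prod.snd_add, tmul_add, map_add, h₁, h₂]
  zero_mem' := by
    simp only [Set.mem_setOf_eq, Prod.fst_zero, Prod.snd_zero, tmul_zero, map_zero]
  smul_mem' := by
    intro t xy h
    simp only [Set.mem_setOf_eq] at h ⊢
    have h1 : (t • xy).1 = (t : A' × A'').1 • xy.1 := rfl
    have h2 : (t • xy).2 = (t : A' × A'').2 • xy.2 := rfl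
    rw [h1, h2]
    have e1 : (1 : A) ⊗ₜ[A'] ((t : A' × A'').1 • xy.1)
        = (algebraMap A' A (t : A' × A'').1) ⊗ₜ[A'] xy.1 := by
      rw [← smul_tmul, Algebra.smul_def, mul_one]
    have e2 : (1 : A) ⊗ₜ[A''] ((t : A' × A'').2 • xy.2)
        = (algebraMap A'' A (t : A' × A'').2) ⊗ₜ[A''] xy.2 := by
      rw [← smul_tmul, Algebra.smul_def, mul_one]
    have e3 : (algebraMap A' A (t : A' × A'').1) ⊗ₜ[A'] xy.1
        = (algebraMap A' A (t : A' × A'').1) • ((1 : A) ⊗ₜ[A'] xy.1) := by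
      rw [smul_tmul', smul_eq_mul, mul_one]
    have e4 : (algebraMap A'' A (t : A' × A'').2) ⊗ₜ[A''] xy.2
        = (algebraMap A'' A (t : A' × A'').2) • ((1 : A) ⊗ₜ[A''] xy.2) := by
      rw [smul_tmul', smul_eq_mul, mul_one]
    have ht : algebraMap A' A (t : A' × A'').1 = algebraMap A'' A (t : A' × A'').2 := t.2
    rw [e1, e2, e3, e4, map_smul, h, ht]

/-- Projection `P →ₗ[T] X` onto the first coordinate. -/
def proj : patchSub A' A'' A X Y φ →ₗ[T A' A'' A] X :=
  (LinearMap.fst (T A' A'' A) X Y).comp (patchSub A' A'' A X Y φ).subtype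

/-- The `T`-bilinear pairing `A' × P → X`, `(a', (x, y)) ↦ a' • x`. -/
def bil : A' →ₗ[T A' A'' A] (patchSub A' A'' A X Y φ →ₗ[T A' A'' A] X) where
  toFun a := a • proj A' A'' A X Y φ
  map_add' a b := add_smul a b _
  map_smul' t a := by
    ext w
    simp only [LinearMap.smul_apply, RingHom.id_apply]
    show (p A' A'' A t * a) • proj A' A'' A X Y φ w = p A' A'' A t • a • proj A' A'' A X Y φ w
    rw [mul_smul]

/-- The canonical `A'`-linear map `A' ⊗[T] P → X` determined by `a' ⊗ (x, y) ↦ a' • x`. -/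
noncomputable def patchMap :
    (TensorProduct (T A' A'' A) A' (patchSub A' A'' A X Y φ)) →ₗ[A'] X where
  toFun := TensorProduct.lift (bil A' A'' A X Y φ)
  map_add' u v := map_add _ u v
  map_smul' a z := by
    simp only [RingHom.id_apply]
    induction z using TensorProduct.induction_on with
    | zero => simp
    | tmul b w =>
      rw [smul_tmul', lift.tmul, lift.tmul]
      show ((a • b) • proj A' A'' A X Y φ) w = a • ((b • proj A' A'' A X Y φ) w)
      simp only [LinearMap.smul_apply, smul_eq_mul]
      rw [mul_smul]
    | add u v hu hv =>
      rw [smul_add, map_add, map_add, hu, hv, smul_add]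

/-!
Let `I = ker j`. Since `j` is surjective, so are `p` and `y ↦ 1 ⊗ y : Y → A ⊗ Y`; the latter has
kernel `I Y`. Hence every `x : X` extends to some `(x, y) ∈ P`, and `A' ⊗[T] P` is the quotient
`P / (ker p) P`, so everything comes down to the inclusion `{(0, y) ∈ P} = 0 × I Y ⊆ (ker p) P`.
The key observation is that `Y` is spanned over `A''` by the second coordinates of the elements of
`P`: thus `I Y` is generated by the `c • y` with `c ∈ I` and `(x, y) ∈ P`, and
`(0, c • y) = (0, c) • (x, y)` with `(0, c) ∈ ker p`.
-/

section BaseChange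

variable {R S M : Type*} [CommRing R] [CommRing S] [Algebra R S] [AddCommGroup M] [Module R M]

theorem ker_tensorProductMk_of_surjective (hS : Function.Surjective (algebraMap R S)) :
    LinearMap.ker (TensorProduct.mk R S M 1) =
      RingHom.ker (algebraMap R S) • (⊤ : Submodule R M) := by
  let e : (R ⧸ RingHom.ker (algebraMap R S)) ≃ₐ[R] S :=
    Ideal.quotientKerAlgEquivOfSurjective (f := Algebra.ofId R S) hS
  have mk_eq : TensorProduct.mk R S M 1 =
      (TensorProduct.congr e.toLinearEquiv (LinearEquiv.refl R M)).toLinearMap ∘ₗ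
        TensorProduct.mk R _ M 1 := by
    ext m
    simp
  rw [mk_eq, LinearEquiv.ker_comp, LinearMap.ker_tensorProductMk]

theorem liftBaseChange_bijective_of_ker_le {N : Type*} [AddCommGroup N] [Module R N] [Module S N]
    [IsScalarTower R S N] (hS : Function.Surjective (algebraMap R S)) {f : M →ₗ[R] N}
    (hf : Function.Surjective f)
    (hker : LinearMap.ker f ≤ RingHom.ker (algebraMap R S) • (⊤ : Submodule R M)) :
    Function.Bijective (f.liftBaseChange S) := by
  refine ⟨(injective_iff_map_eq_zero _).2 fun z hz ↦ ?_, fun n ↦ ?_⟩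
  · obtain ⟨m, rfl⟩ := TensorProduct.mk_surjective R M S hS z
    have hm : m ∈ LinearMap.ker f := by simpa using hz
    exact (ker_tensorProductMk_of_surjective (M := M) hS).ge (hker hm)
  · obtain ⟨m, rfl⟩ := hf n
    exact ⟨1 ⊗ₜ m, f.liftBaseChange_one_tmul S m⟩

end BaseChange

section Patching

variable {R S₁ S₂ S M₁ M₂ : Type*} [CommRing R] [CommRing S₁] [CommRing S₂] [CommRing S]
  [Algebra R S₁] [Algebra R S₂] [Algebra S₁ S] [Algebra S₂ S]
  [AddCommGroup M₁] [Module S₁ M₁] [Module R M₁]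
  [AddCommGroup M₂] [Module S₂ M₂] [Module R M₂]

variable (R S₁ S₂ S) in
/-- The comparison map from `R` to the fiber product `S₁ ×_S S₂` is surjective: a weak form of
the Cartesian property of the square, whose commutativity is expressed by scalar towers. -/
def SurjectsOntoFiberProduct : Prop :=
  ∀ (a : S₁) (b : S₂), algebraMap S₁ S a = algebraMap S₂ S b →
    ∃ r : R, algebraMap R S₁ r = a ∧ algebraMap R S₂ r = b

theorem SurjectsOntoFiberProduct.algebraMap_surjective
    (hR : SurjectsOntoFiberProduct R S₁ S₂ S) (hj : Function.Surjective (algebraMap S₂ S)) :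
    Function.Surjective (algebraMap R S₁) := fun a ↦
  have ⟨b, hb⟩ := hj (algebraMap S₁ S a)
  have ⟨r, hr, _⟩ := hR a b hb.symm
  ⟨r, hr⟩

variable [Algebra R S] [IsScalarTower R S₁ S] [IsScalarTower R S₂ S]
  [IsScalarTower R S₁ M₁] [IsScalarTower R S₂ M₂]

variable (R) in
/-- The module obtained by patching `M₁` and `M₂` along a gluing map `ψ` of their base changes
to `S`: the pairs `(x, y)` with `ψ (1 ⊗ x) = 1 ⊗ y`, as an `R`-module. -/
def patchingModule (ψ : S ⊗[S₁] M₁ →ₗ[S] S ⊗[S₂] M₂) : Submodule R (M₁ × M₂) :=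
  LinearMap.eqLocus
    (ψ.restrictScalars R ∘ₗ (TensorProduct.mk S₁ S M₁ 1).restrictScalars R ∘ₗ
      LinearMap.fst R M₁ M₂)
    ((TensorProduct.mk S₂ S M₂ 1).restrictScalars R ∘ₗ LinearMap.snd R M₁ M₂)

variable {ψ : S ⊗[S₁] M₁ →ₗ[S] S ⊗[S₂] M₂}

theorem mem_patchingModule {x : M₁} {y : M₂} :
    (x, y) ∈ patchingModule R ψ ↔ ψ (1 ⊗ₜ x) = 1 ⊗ₜ y :=
  Iff.rfl

theorem zero_prod_mem_patchingModule {y : M₂} :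
    ((0 : M₁), y) ∈ patchingModule R ψ ↔ (1 : S) ⊗ₜ[S₂] y = 0 := by
  rw [mem_patchingModule, tmul_zero, map_zero, eq_comm]

variable (R ψ) in
theorem exists_prod_mem_patchingModule (hj : Function.Surjective (algebraMap S₂ S)) (x : M₁) :
    ∃ y : M₂, (x, y) ∈ patchingModule R ψ :=
  have ⟨y, hy⟩ := TensorProduct.mk_surjective S₂ M₂ S hj (ψ (1 ⊗ₜ x))
  ⟨y, hy.symm⟩

variable (R ψ) in
/-- The projection of the patched module to its first coordinate. -/
def patchingModuleFst : patchingModule R ψ →ₗ[R] M₁ :=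
  LinearMap.fst R M₁ M₂ ∘ₗ (patchingModule R ψ).subtype

theorem patchingModuleFst_surjective (hj : Function.Surjective (algebraMap S₂ S)) :
    Function.Surjective (patchingModuleFst R ψ) := fun x ↦
  have ⟨y, hxy⟩ := exists_prod_mem_patchingModule R ψ hj x
  ⟨⟨(x, y), hxy⟩, rfl⟩

variable (R ψ) in
theorem exists_mem_span_snd_patchingModule (hj : Function.Surjective (algebraMap S₂ S))
    (s : S ⊗[S₁] M₁) :
    ∃ y ∈ Submodule.span S₂ (Prod.snd '' (patchingModule R ψ : Set (M₁ × M₂))),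
      (1 : S) ⊗ₜ[S₂] y = ψ s := by
  induction s using TensorProduct.induction_on with
  | zero => exact ⟨0, zero_mem _, by simp⟩
  | tmul a x =>
    obtain ⟨b, rfl⟩ := hj a
    obtain ⟨y, hxy⟩ := exists_prod_mem_patchingModule R ψ hj x
    refine ⟨b • y, Submodule.smul_mem _ b (Submodule.subset_span ⟨_, hxy, rfl⟩), ?_⟩
    calc (1 : S) ⊗ₜ[S₂] (b • y)
        = algebraMap S₂ S b • (1 : S) ⊗ₜ[S₂] y := by rw [tmul_smul, algebraMap_smul]
      _ = ψ (algebraMap S₂ S b • (1 ⊗ₜ x)) := by rw [map_smul, mem_patchingModule.1 hxy]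
      _ = ψ (algebraMap S₂ S b ⊗ₜ x) := by rw [smul_tmul', smul_eq_mul, mul_one]
  | add u v hu hv =>
    obtain ⟨y, hy, hyu⟩ := hu
    obtain ⟨z, hz, hzv⟩ := hv
    exact ⟨y + z, add_mem hy hz, by rw [tmul_add, hyu, hzv, map_add]⟩

theorem span_snd_patchingModule (hψ : Function.Surjective ψ)
    (hj : Function.Surjective (algebraMap S₂ S)) :
    Submodule.span S₂ (Prod.snd '' (patchingModule R ψ : Set (M₁ × M₂))) = ⊤ := by
  refine Submodule.eq_top_iff'.2 fun z ↦ ?_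
  obtain ⟨s, hs⟩ := hψ (1 ⊗ₜ z)
  obtain ⟨y, hy, hys⟩ := exists_mem_span_snd_patchingModule R ψ hj s
  have hzy : ((0 : M₁), z - y) ∈ patchingModule R ψ := by
    rw [zero_prod_mem_patchingModule, tmul_sub, hys, hs, sub_self]
  exact (Submodule.sub_mem_iff_left _ hy).1 (Submodule.subset_span ⟨_, hzy, rfl⟩)

theorem zero_prod_smul_mem_ker_smul_patchingModule (hR : SurjectsOntoFiberProduct R S₁ S₂ S)
    {c : S₂} (hc : c ∈ RingHom.ker (algebraMap S₂ S)) {y : M₂}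
    (hy : y ∈ Submodule.span S₂ (Prod.snd '' (patchingModule R ψ : Set (M₁ × M₂)))) :
    ((0 : M₁), c • y) ∈ RingHom.ker (algebraMap R S₁) • patchingModule R ψ := by
  induction hy using Submodule.span_induction generalizing c with
  | mem y hy =>
    obtain ⟨⟨x, y⟩, hxy, rfl⟩ := hy
    obtain ⟨r, hr₁, hr₂⟩ := hR 0 c (by rw [map_zero, hc])
    have smul_eq : r • (x, y) = (0, c • y) := by
      rw [Prod.smul_mk, ← algebraMap_smul S₁ r x, ← algebraMap_smul S₂ r y, hr₁, hr₂, zero_smul]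
    exact smul_eq ▸ Submodule.smul_mem_smul hr₁ hxy
  | zero => rw [smul_zero]; exact zero_mem _
  | add y z _ _ hy hz => simpa [smul_add] using add_mem (hy hc) (hz hc)
  | smul a y _ hy => exact smul_smul c a y ▸ hy (Ideal.mul_mem_right a _ hc)

theorem zero_prod_mem_ker_smul_patchingModule (hR : SurjectsOntoFiberProduct R S₁ S₂ S)
    (hψ : Function.Surjective ψ) (hj : Function.Surjective (algebraMap S₂ S)) {y : M₂}
    (hy : ((0 : M₁), y) ∈ patchingModule R ψ) :
    ((0 : M₁), y) ∈ RingHom.ker (algebraMap R S₁) • patchingModule R ψ := by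
  have hy' : y ∈ RingHom.ker (algebraMap S₂ S) • (⊤ : Submodule S₂ M₂) :=
    (ker_tensorProductMk_of_surjective hj).le (zero_prod_mem_patchingModule.1 hy)
  rw [← span_snd_patchingModule (R := R) hψ hj] at hy'
  refine Submodule.smul_induction_on hy' (fun c hc z hz ↦ ?_) fun y z hy hz ↦ ?_
  · exact zero_prod_smul_mem_ker_smul_patchingModule hR hc hz
  · simpa using add_mem hy hz

theorem ker_patchingModuleFst_le (hR : SurjectsOntoFiberProduct R S₁ S₂ S)
    (hψ : Function.Surjective ψ) (hj : Function.Surjective (algebraMap S₂ S)) :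
    LinearMap.ker (patchingModuleFst R ψ) ≤
      RingHom.ker (algebraMap R S₁) • (⊤ : Submodule R (patchingModule R ψ)) := by
  rintro ⟨⟨x, y⟩, hxy⟩ (rfl : x = 0)
  have smul_eq_map : RingHom.ker (algebraMap R S₁) • patchingModule R ψ =
      (RingHom.ker (algebraMap R S₁) • ⊤ : Submodule R (patchingModule R ψ)).map
        (patchingModule R ψ).subtype := by
    rw [Submodule.map_smul'', Submodule.map_subtype_top]
  obtain ⟨w, hw, hwy⟩ := smul_eq_map.le (zero_prod_mem_ker_smul_patchingModule hR hψ hj hxy)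
  exact (Subtype.ext hwy : w = ⟨(0, y), hxy⟩) ▸ hw

theorem stmt_10_general (hR : SurjectsOntoFiberProduct R S₁ S₂ S)
    (hψ : Function.Surjective ψ) (hj : Function.Surjective (algebraMap S₂ S)) :
    Function.Bijective ((patchingModuleFst R ψ).liftBaseChange S₁) :=
  liftBaseChange_bijective_of_ker_le (hR.algebraMap_surjective hj) (patchingModuleFst_surjective hj)
    (ker_patchingModuleFst_le hR hψ hj)

end Patching

section FiberProduct

/-- `A'` as an algebra over the fiber product; its module structure is `moduleTleft`. -/
abbrev algebraTleft : Algebra (T A' A'' A) A' := Algebra.compHom A' (p A' A'' A)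

/-- `A''` as an algebra over the fiber product; its module structure is `moduleTright`. -/
abbrev algebraTright : Algebra (T A' A'' A) A'' := Algebra.compHom A'' (q A' A'' A)

/-- `A` as an algebra over the fiber product, through `A'`. -/
abbrev algebraTbase : Algebra (T A' A'' A) A :=
  Algebra.compHom A ((algebraMap A' A).comp (p A' A'' A))

attribute [local instance] algebraTleft algebraTright algebraTbase

theorem patchMap_bijective (hj : Function.Surjective (algebraMap A'' A)) :
    Function.Bijective (patchMap A' A'' A X Y φ) := by
  have : IsScalarTower (T A' A'' A) A' A := .of_algebraMap_eq fun _ ↦ rfl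
  have : IsScalarTower (T A' A'' A) A'' A := .of_algebraMap_eq fun t ↦ t.2
  have : IsScalarTower (T A' A'' A) A' X := ⟨fun t a x ↦ mul_smul (p A' A'' A t) a x⟩
  have : IsScalarTower (T A' A'' A) A'' Y := ⟨fun t a y ↦ mul_smul (q A' A'' A t) a y⟩
  have hT : SurjectsOntoFiberProduct (T A' A'' A) A' A'' A :=
    fun a b hab ↦ ⟨⟨(a, b), hab⟩, rfl, rfl⟩
  exact stmt_10_general (ψ := φ.toLinearMap) hT φ.surjective hj

end FiberProduct

/-- Milnor patching (module case of Lemma (i) in the paper's proof that `GL(C)` satisfies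
Condition (E)): if `j : A'' → A` is surjective, then for any `A'`-module `X`, `A''`-module
`Y` and `A`-linear isomorphism `φ : A ⊗[A'] X ≅ A ⊗[A''] Y`, the natural `A'`-linear map
`A' ⊗[T] P → X`, `a' ⊗ (x, y) ↦ a' • x`, from the base change of the patched module
`P = {(x, y) : φ (1 ⊗ x) = 1 ⊗ y}` along `p : T → A'`, is bijective. -/
theorem stmt_10 (hj : Function.Surjective (algebraMap A'' A)) :
    (∀ (a : A') (w : patchSub A' A'' A X Y φ),
        patchMap A' A'' A X Y φ (a ⊗ₜ[T A' A'' A] w) = a • (w : X × Y).1) ∧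
      Function.Bijective (patchMap A' A'' A X Y φ) := by
  exact ⟨fun _ _ ↦ rfl, patchMap_bijective A' A'' A X Y φ hj⟩

end Stmt10
end

section
/- Let C be a symmetric monoidal category, let x, y be objects of C such that the braiding satisfies (β_{x,x}).hom = 𝟙_{x ⊗ x}, and let i : x ⊗ y ≅ 𝟙_C and j : y ⊗ x ≅ 𝟙_C be isomorphisms. Consider the canonical automorphism κ of x defined as the composite x ≅ 𝟙_C ⊗ x (inverse left unitor) ≅ (x ⊗ y) ⊗ x (via i.inv ▷ x) ≅ x ⊗ (y ⊗ x) (associator) ≅ x ⊗ 𝟙_C (via x ◁ j.hom) ≅ x (right unitor). Then κ = 𝟙_x if and only if i.hom = (β_{x,y}).hom ≫ j.hom, i.e. if and only if the triangle formed by the braiding x ⊗ y → y ⊗ x and the two maps i, j to the unit commutes. -/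
open CategoryTheory MonoidalCategory

universe v u

/-! Naturality of the braiding moves the counit `j` from the right of `x` to its left, and the
hexagon identity with `β_ x x = 𝟙` then identifies the zigzag automorphism with the scalar
`i.inv ≫ (β_ x y).hom ≫ j : 𝟙_ C ⟶ 𝟙_ C` acting on `x`. Since `x` is invertible, this action is
faithful, so the automorphism is trivial exactly when the scalar is. -/

section Monoidal

variable {C : Type u} [Category.{v} C] [MonoidalCategory C]

theorem tensorRight_faithful_of_tensor_iso_unit {x y : C} (i : x ⊗ y ≅ 𝟙_ C) :
    (tensorRight x).Faithful :=
  Functor.Faithful.of_comp_iso (G := tensorRight y) (H := 𝟭 C) <|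
    (tensorRightTensor x y).symm ≪≫ (tensoringRight C).mapIso i ≪≫ rightUnitorNatIso C

theorem leftUnitor_conj_whiskerRight_eq_id_iff {x : C} [(tensorRight x).Faithful]
    (f : 𝟙_ C ⟶ 𝟙_ C) :
    (λ_ x).inv ≫ f ▷ x ≫ (λ_ x).hom = 𝟙 x ↔ f = 𝟙 (𝟙_ C) := by
  rw [Iso.inv_comp_eq, Category.comp_id, ← Iso.eq_comp_inv, Iso.hom_inv_id]
  exact (tensorRight x).map_injective.eq_iff' ((tensorRight x).map_id _)

end Monoidal

section Braided

variable {C : Type u} [Category.{v} C] [MonoidalCategory C] [BraidedCategory C]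

theorem associator_hom_comp_braiding_hom {x : C} (hx : (β_ x x).hom = 𝟙 (x ⊗ x)) (y : C) :
    (α_ x y x).hom ≫ (β_ x (y ⊗ x)).hom = (β_ x y).hom ▷ x := by
  simp [BraidedCategory.braiding_tensor_right_hom, hx]

theorem whiskerLeft_comp_rightUnitor_hom_eq_braiding (x : C) {a : C} (f : a ⟶ 𝟙_ C) :
    x ◁ f ≫ (ρ_ x).hom = (β_ x a).hom ≫ f ▷ x ≫ (λ_ x).hom := by
  rw [← braiding_leftUnitor, BraidedCategory.braiding_naturality_right_assoc]

theorem zigzag_eq_leftUnitor_conj_whiskerRight {x y : C} (hx : (β_ x x).hom = 𝟙 (x ⊗ x))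
    (η : 𝟙_ C ⟶ x ⊗ y) (ε : y ⊗ x ⟶ 𝟙_ C) :
    (λ_ x).inv ≫ η ▷ x ≫ (α_ x y x).hom ≫ x ◁ ε ≫ (ρ_ x).hom =
      (λ_ x).inv ≫ (η ≫ (β_ x y).hom ≫ ε) ▷ x ≫ (λ_ x).hom := by
  rw [whiskerLeft_comp_rightUnitor_hom_eq_braiding,
    reassoc_of% associator_hom_comp_braiding_hom hx y]
  simp only [comp_whiskerRight, Category.assoc]

end Braided

theorem stmt_14_general {C : Type u} [Category.{v} C] [MonoidalCategory C] [BraidedCategory C]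
    (x y : C) (hx : (β_ x x).hom = 𝟙 (x ⊗ x)) (i : x ⊗ y ≅ 𝟙_ C) (j : y ⊗ x ⟶ 𝟙_ C) :
    ((λ_ x).inv ≫ i.inv ▷ x ≫ (α_ x y x).hom ≫ x ◁ j ≫ (ρ_ x).hom = 𝟙 x)
      ↔ i.hom = (β_ x y).hom ≫ j := by
  have : (tensorRight x).Faithful := tensorRight_faithful_of_tensor_iso_unit i
  rw [zigzag_eq_leftUnitor_conj_whiskerRight hx, leftUnitor_conj_whiskerRight_eq_id_iff,
    Iso.inv_comp_eq, Category.comp_id, eq_comm]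

/-- In a symmetric monoidal category, for objects `x, y` with `β_{x,x} = 𝟙` and
isomorphisms `i : x ⊗ y ≅ 𝟙_ C`, `j : y ⊗ x ≅ 𝟙_ C`, the canonical automorphism
`x ≅ 𝟙 ⊗ x ≅ (x ⊗ y) ⊗ x ≅ x ⊗ (y ⊗ x) ≅ x ⊗ 𝟙 ≅ x` is the identity iff
`i.hom = (β_ x y).hom ≫ j.hom`. -/
theorem stmt_14 {C : Type u} [Category.{v} C] [MonoidalCategory C] [SymmetricCategory C]
    (x y : C) (hx : (β_ x x).hom = 𝟙 (x ⊗ x))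
    (i : x ⊗ y ≅ 𝟙_ C) (j : y ⊗ x ≅ 𝟙_ C) :
    ((λ_ x).inv ≫ i.inv ▷ x ≫ (α_ x y x).hom ≫ x ◁ j.hom ≫ (ρ_ x).hom = 𝟙 x)
      ↔ i.hom = (β_ x y).hom ≫ j.hom :=
  stmt_14_general x y hx i j.hom
end
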